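/- Let K ≥ 1 and for each k ∈ {1,…,K} let 0 < p̂_k < q̂_k and σ_k² > 0. Define f_{U_k}(u) := (e^{−(u−σ_k²)/q̂_k} − e^{−(u−σ_k²)/p̂_k})/(q̂_k − p̂_k) and f_{V_k}(v) := (1/q̂_k) e^{−(v−σ_k²)/q̂_k} for arguments ≥ σ_k² (0 otherwise), and for integers n ≥ 2 define the smoothed densities f_{U_k}^{(n)}(x) := ∫_{σ_k²}^∞ (n^n x^{n−1}/((n−1)! u^n)) e^{−nx/u} f_{U_k}(u) du and f_{V_k}^{(n)}(x) := ∫_{σ_k²}^∞ (n^n x^{n−1}/((n−1)! v^n)) e^{−nx/v} f_{V_k}(v) dv for x > 0. Then lim_{n→∞} (1/2) ∫_{(0,∞)^K} |∏_{k=1}^K f_{U_k}^{(n)}(y_k) − ∏_{k=1}^K f_{V_k}^{(n)}(y_k)| dy = (1/2) ∫_{ℝ^K} |∏_{k=1}^K f_{U_k}(y_k) − ∏_{k=1}^K f_{V_k}(y_k)| dy. -/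

import Mathlib

/-!
The smoothed density is the density of `S_n * U`, where `S_n` has the Gamma distribution of shape
and rate `n` and is independent of `U`: a mixture over `s ~ S_n` of the dilations
`x ↦ s⁻¹ * f (x / s)`. Dilations are isometries of `L¹(ℝ)` depending continuously on `s`, and `S_n`
has mean `1` and variance `1 / n`, so by Minkowski's and Chebyshev's inequalities the smoothed
density of any integrable `f` converges to `f` in `L¹`. Tensor products inherit `L¹` convergence
from their factors, and the total variation distance is continuous in `L¹`.
-/

open MeasureTheory Real Set Filter

open ProbabilityTheory
open scoped ENNReal Topology

section Dilation

variable {E : Type*} [NormedAddCommGroup E] [NormedSpace ℝ E] {f : ℝ → E} {μ : Measure ℝ}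

/-- The dilation of `f` by the factor `s`, normalised to preserve the `L¹` norm: if `f` is the
density of a random variable `U` and `0 < s`, this is the density of `s * U`. -/
noncomputable def dilate (s : ℝ) (f : ℝ → E) (x : ℝ) : E := s⁻¹ • f (x / s)

lemma dilate_sub (s : ℝ) (f g : ℝ → E) : dilate s (f - g) = dilate s f - dilate s g :=
  funext fun _ ↦ smul_sub _ _ _

lemma lintegral_enorm_dilate {s : ℝ} (hs : s ≠ 0) (f : ℝ → E) :
    ∫⁻ x, ‖dilate s f x‖ₑ = ∫⁻ x, ‖f x‖ₑ := by
  let e : ℝ ≃ᵐ ℝ := (Homeomorph.mulLeft₀ s hs).toMeasurableEquiv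
  have he : ENNReal.ofReal |s| • Measure.map e volume = volume := smul_map_volume_mul_left hs
  have hse : ENNReal.ofReal |s| * ‖s⁻¹‖ₑ = 1 := by
    rw [← Real.enorm_eq_ofReal_abs, ← enorm_mul, mul_inv_cancel₀ hs, enorm_one]
  calc ∫⁻ x, ‖dilate s f x‖ₑ
      = ENNReal.ofReal |s| * ∫⁻ x, ‖s⁻¹‖ₑ * ‖f x‖ₑ := by
        rw [← he, lintegral_smul_measure, lintegral_map_equiv, smul_eq_mul, he]
        simp only [dilate, enorm_smul, e, Homeomorph.toMeasurableEquiv_coe,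
          Homeomorph.coe_mulLeft₀, mul_div_cancel_left₀ _ hs]
    _ = ∫⁻ x, ‖f x‖ₑ := by
        rw [lintegral_const_mul' _ _ enorm_ne_top, ← mul_assoc, hse, one_mul]

lemma eLpNorm_dilate {s : ℝ} (hs : s ≠ 0) (f : ℝ → E) :
    eLpNorm (dilate s f) 1 volume = eLpNorm f 1 volume := by
  simp only [eLpNorm_one_eq_lintegral_enorm, lintegral_enorm_dilate hs]

lemma quasiMeasurePreserving_div_const {s : ℝ} (hs : s ≠ 0) :
    Measure.QuasiMeasurePreserving (fun x : ℝ ↦ x / s) := by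
  simpa only [div_eq_inv_mul, smul_eq_mul] using!
    Measure.quasiMeasurePreserving_smul (μ := (volume : Measure ℝ)) (inv_ne_zero hs)

lemma aestronglyMeasurable_dilate_prod [SFinite μ] (hμ : ∀ᵐ s ∂μ, s ≠ 0)
    (hf : AEStronglyMeasurable f volume) :
    AEStronglyMeasurable (fun z : ℝ × ℝ ↦ dilate z.2 f z.1) (volume.prod μ) := by
  have hdiv : Measure.QuasiMeasurePreserving (fun z : ℝ × ℝ ↦ z.1 / z.2) (volume.prod μ) :=
    QuasiMeasurePreserving.prod_of_left (by fun_prop)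
      (hμ.mono fun _ ↦ quasiMeasurePreserving_div_const)
  exact measurable_snd.inv.aestronglyMeasurable.smul (hf.comp_quasiMeasurePreserving hdiv)

lemma aestronglyMeasurable_dilate {s : ℝ} (hs : s ≠ 0) (hf : AEStronglyMeasurable f volume) :
    AEStronglyMeasurable (dilate s f) volume :=
  (hf.comp_quasiMeasurePreserving (quasiMeasurePreserving_div_const hs)).const_smul _

lemma integrable_dilate_prod [IsFiniteMeasure μ] (hμ : ∀ᵐ s ∂μ, s ≠ 0) (hf : Integrable f) :
    Integrable (fun z : ℝ × ℝ ↦ dilate z.2 f z.1) (volume.prod μ) := by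
  have hmeas := aestronglyMeasurable_dilate_prod hμ hf.aestronglyMeasurable
  refine ⟨hmeas, ?_⟩
  rw [hasFiniteIntegral_iff_enorm, lintegral_prod_symm _ hmeas.enorm,
    lintegral_congr_ae (hμ.mono fun _ hs ↦ lintegral_enorm_dilate hs f), lintegral_const]
  exact ENNReal.mul_lt_top hf.hasFiniteIntegral (measure_lt_top _ _)

lemma dilate_one (f : ℝ → E) : dilate 1 f = f := by
  ext x; simp only [dilate, inv_one, div_one, one_smul]

lemma enorm_dilate_sub_le_indicator {g : ℝ → E} {C R : ℝ} (hR0 : 0 ≤ R) (hC : ∀ x, ‖g x‖ ≤ C)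
    (hR : ∀ x, R < ‖x‖ → g x = 0) {s : ℝ} (hs : s ∈ Ioo (1 / 2) 2) (x : ℝ) :
    ‖dilate s g x - g x‖ₑ ≤
      (Metric.closedBall 0 (2 * R)).indicator (fun _ ↦ ENNReal.ofReal (3 * C)) x := by
  have hs0 : 0 < s := one_half_pos.trans hs.1
  by_cases hx : x ∈ Metric.closedBall 0 (2 * R)
  · rw [indicator_of_mem hx, ← ofReal_norm]
    have hs_inv : s⁻¹ ≤ 2 := inv_le_of_inv_le₀ two_pos (by linarith [hs.1])
    have hdil : ‖dilate s g x‖ ≤ 2 * C := by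
      rw [dilate, norm_smul, norm_of_nonneg (inv_nonneg.2 hs0.le)]
      gcongr
      exact hC _
    exact ENNReal.ofReal_le_ofReal (by linarith [norm_sub_le (dilate s g x) (g x), hC x])
  · rw [mem_closedBall_zero_iff, not_le] at hx
    have hxs : R < ‖x / s‖ := by
      rw [norm_div, norm_of_nonneg hs0.le, lt_div_iff₀ hs0]
      nlinarith [hs.2]
    rw [dilate, hR _ hxs, hR _ (by linarith), smul_zero, sub_zero, enorm_zero]
    exact zero_le

lemma tendsto_eLpNorm_dilate_sub_of_hasCompactSupport {g : ℝ → E} (hg : Continuous g)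
    (hgc : HasCompactSupport g) :
    Tendsto (fun s ↦ eLpNorm (dilate s g - g) 1 volume) (𝓝 1) (𝓝 0) := by
  obtain ⟨C, hC⟩ := hgc.exists_bound_of_continuous hg
  obtain ⟨R, hR0, hR⟩ := hgc.isCompact.isBounded.exists_pos_norm_le
  have hg_zero (x : ℝ) (hx : R < ‖x‖) : g x = 0 :=
    image_eq_zero_of_notMem_tsupport fun hxs ↦ (hR x hxs).not_gt hx
  have hbound_int : ∫⁻ x, (Metric.closedBall (0 : ℝ) (2 * R)).indicator
      (fun _ ↦ ENNReal.ofReal (3 * C)) x ≠ ∞ := by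
    rw [lintegral_indicator_const measurableSet_closedBall]
    exact ENNReal.mul_ne_top ENNReal.ofReal_ne_top measure_closedBall_lt_top.ne
  have hlim (x : ℝ) : Tendsto (fun s ↦ ‖dilate s g x - g x‖ₑ) (𝓝 1) (𝓝 0) := by
    have hcont : ContinuousAt (fun s ↦ ‖dilate s g x - g x‖ₑ) 1 := by
      unfold dilate
      fun_prop (disch := norm_num)
    simpa only [ContinuousAt, dilate_one, sub_self, enorm_zero] using hcont
  simp only [eLpNorm_one_eq_lintegral_enorm, Pi.sub_apply]
  rw [← lintegral_zero (μ := (volume : Measure ℝ))]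
  refine tendsto_lintegral_filter_of_dominated_convergence _ (.of_forall fun s ↦ ?_) ?_
    hbound_int (.of_forall hlim)
  · unfold dilate
    exact Continuous.measurable (by fun_prop)
  · filter_upwards [Ioo_mem_nhds one_half_lt_one one_lt_two] with s hs
    exact .of_forall (enorm_dilate_sub_le_indicator hR0.le hC hg_zero hs)

lemma tendsto_eLpNorm_dilate_sub (hf : Integrable f) :
    Tendsto (fun s ↦ eLpNorm (dilate s f - f) 1 volume) (𝓝 1) (𝓝 0) := by
  refine ENNReal.tendsto_nhds_zero.2 fun ε hε ↦ ?_
  have hε3 : ε / 3 ≠ 0 := (ENNReal.div_pos hε.ne' (by simp)).ne'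
  obtain ⟨g, hgc, hfg, hg, hgL⟩ :=
    (memLp_one_iff_integrable.2 hf).exists_hasCompactSupport_eLpNorm_sub_le ENNReal.one_ne_top hε3
  have hg_near := ENNReal.tendsto_nhds_zero.1
    (tendsto_eLpNorm_dilate_sub_of_hasCompactSupport hg hgc) (ε / 3) hε3.bot_lt
  filter_upwards [hg_near, eventually_ne_nhds one_ne_zero] with s hsg hs
  have hfg_meas := hf.aestronglyMeasurable.sub hgL.aestronglyMeasurable
  have hg_meas := (aestronglyMeasurable_dilate hs hgL.1).sub hgL.1
  have hsplit : dilate s f - f = dilate s (f - g) + (dilate s g - g) - (f - g) := by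
    rw [dilate_sub]; abel
  calc eLpNorm (dilate s f - f) 1 volume
      ≤ eLpNorm (dilate s (f - g)) 1 volume + eLpNorm (dilate s g - g) 1 volume
          + eLpNorm (f - g) 1 volume := by
        rw [hsplit]
        have hd := aestronglyMeasurable_dilate hs hfg_meas
        exact (eLpNorm_sub_le (hd.add hg_meas) hfg_meas le_rfl).trans
          (add_le_add_left (eLpNorm_add_le hd hg_meas le_rfl) _)
    _ ≤ ε / 3 + ε / 3 + ε / 3 := by
        rw [eLpNorm_dilate hs]; gcongr
    _ = ε := ENNReal.add_thirds ε

/-- The mixture of the dilations `dilate s f` with respect to `μ(ds)`, i.e. the multiplicative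
convolution of `μ` and `f`: if `S ~ μ` is positive and independent of `U ~ f`, this is the density
of `S * U`. -/
noncomputable def dilationMixture (μ : Measure ℝ) (f : ℝ → E) (x : ℝ) : E :=
  ∫ s, dilate s f x ∂μ

lemma integrable_dilationMixture [IsFiniteMeasure μ] (hμ : ∀ᵐ s ∂μ, s ≠ 0) (hf : Integrable f) :
    Integrable (dilationMixture μ f) :=
  (integrable_dilate_prod hμ hf).integral_prod_left

lemma eLpNorm_dilationMixture_sub_le [CompleteSpace E] [IsProbabilityMeasure μ]
    (hμ : ∀ᵐ s ∂μ, s ≠ 0) (hf : Integrable f) :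
    eLpNorm (dilationMixture μ f - f) 1 volume ≤
      ∫⁻ s, eLpNorm (dilate s f - f) 1 volume ∂μ := by
  have hint := integrable_dilate_prod hμ hf
  have hmeas : AEStronglyMeasurable (fun z : ℝ × ℝ ↦ dilate z.2 f z.1 - f z.1) (volume.prod μ) :=
    hint.1.sub hf.aestronglyMeasurable.comp_fst
  simp only [eLpNorm_one_eq_lintegral_enorm, Pi.sub_apply]
  rw [← lintegral_lintegral_swap hmeas.enorm]
  refine lintegral_mono_ae ?_
  filter_upwards [hint.prod_right_ae] with x hx
  calc ‖dilationMixture μ f x - f x‖ₑ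
      = ‖∫ s, (dilate s f x - f x) ∂μ‖ₑ := by
        rw [integral_sub hx (integrable_const _), integral_const, probReal_univ, one_smul,
          dilationMixture]
    _ ≤ ∫⁻ s, ‖dilate s f x - f x‖ₑ ∂μ := enorm_integral_le_lintegral_enorm _

end Dilation

lemma tendsto_lintegral_of_tendsto_measure_compl {X α : Type*} [TopologicalSpace X]
    [MeasurableSpace X] [OpensMeasurableSpace X] {l : Filter α} {μ : α → Measure X}
    [∀ i, IsProbabilityMeasure (μ i)] {c : X}
    (hμ : ∀ U ∈ 𝓝 c, Tendsto (fun i ↦ μ i Uᶜ) l (𝓝 0)) {φ : X → ℝ≥0∞} {C : ℝ≥0∞} (hC : C ≠ ∞)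
    (hφC : ∀ᶠ i in l, ∀ᵐ x ∂μ i, φ x ≤ C) (hφ : Tendsto φ (𝓝 c) (𝓝 0)) :
    Tendsto (fun i ↦ ∫⁻ x, φ x ∂μ i) l (𝓝 0) := by
  refine ENNReal.tendsto_nhds_zero.2 fun ε hε ↦ ?_
  have hε2 : 0 < ε / 2 := ENNReal.half_pos hε.ne'
  obtain ⟨U, hUφ, hU, hcU⟩ := eventually_nhds_iff.1 (ENNReal.tendsto_nhds_zero.1 hφ _ hε2)
  have hfar : Tendsto (fun i ↦ C * μ i Uᶜ) l (𝓝 0) := by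
    simpa only [mul_zero] using ENNReal.Tendsto.const_mul (hμ U (hU.mem_nhds hcU)) (.inr hC)
  filter_upwards [hφC, ENNReal.tendsto_nhds_zero.1 hfar _ hε2] with i hi hfar_i
  calc ∫⁻ x, φ x ∂μ i
      = ∫⁻ x in U, φ x ∂μ i + ∫⁻ x in Uᶜ, φ x ∂μ i :=
        (lintegral_add_compl _ hU.measurableSet).symm
    _ ≤ ε / 2 * μ i U + C * μ i Uᶜ := by
        gcongr
        · rw [← setLIntegral_const]
          exact setLIntegral_mono_ae' hU.measurableSet (.of_forall hUφ)
        · rw [← setLIntegral_const]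
          exact setLIntegral_mono_ae' hU.measurableSet.compl (hi.mono fun _ hx _ ↦ hx)
    _ ≤ ε / 2 + ε / 2 := by
        gcongr
        exact mul_le_of_le_one_right' prob_le_one
    _ = ε := ENNReal.add_halves ε

theorem tendsto_eLpNorm_dilationMixture_sub {E α : Type*} [NormedAddCommGroup E] [NormedSpace ℝ E]
    [CompleteSpace E] {l : Filter α} {μ : α → Measure ℝ} [∀ i, IsProbabilityMeasure (μ i)]
    (hμ0 : ∀ i, ∀ᵐ s ∂μ i, s ≠ 0) (hμ1 : ∀ U ∈ 𝓝 (1 : ℝ), Tendsto (fun i ↦ μ i Uᶜ) l (𝓝 0))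
    {f : ℝ → E} (hf : Integrable f) :
    Tendsto (fun i ↦ eLpNorm (dilationMixture (μ i) f - f) 1 volume) l (𝓝 0) := by
  refine tendsto_of_tendsto_of_tendsto_of_le_of_le tendsto_const_nhds
    (tendsto_lintegral_of_tendsto_measure_compl hμ1 (C := eLpNorm f 1 volume + eLpNorm f 1 volume)
      ?_ (.of_forall fun i ↦ (hμ0 i).mono fun s hs ↦ ?_) (tendsto_eLpNorm_dilate_sub hf))
    (fun _ ↦ zero_le) fun i ↦ eLpNorm_dilationMixture_sub_le (hμ0 i) hf
  · have := (memLp_one_iff_integrable.2 hf).eLpNorm_ne_top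
    exact ENNReal.add_ne_top.2 ⟨this, this⟩
  · calc eLpNorm (dilate s f - f) 1 volume
        ≤ eLpNorm (dilate s f) 1 volume + eLpNorm f 1 volume :=
          eLpNorm_sub_le (aestronglyMeasurable_dilate hs hf.1) hf.1 le_rfl
      _ = eLpNorm f 1 volume + eLpNorm f 1 volume := by rw [eLpNorm_dilate hs]

section GammaDistribution

variable {E : Type*} [NormedAddCommGroup E] [NormedSpace ℝ E] {a r : ℝ}

lemma mul_gammaPDFReal (ha : 0 < a) (hr : 0 < r) (x : ℝ) :
    x * gammaPDFReal a r x = a / r * gammaPDFReal (a + 1) r x := by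
  unfold gammaPDFReal
  split_ifs with hx
  · have hpow : x ^ a = x * x ^ (a - 1) := by
      rw [mul_comm, ← rpow_add_one' hx (by linarith), sub_add_cancel]
    rw [Gamma_add_one ha.ne', rpow_add_one hr.ne', add_sub_cancel_right, hpow]
    field_simp
  · simp only [mul_zero]

lemma sq_mul_gammaPDFReal (ha : 0 < a) (hr : 0 < r) (x : ℝ) :
    x ^ 2 * gammaPDFReal a r x = a * (a + 1) / r ^ 2 * gammaPDFReal (a + 2) r x := by
  rw [sq, mul_assoc, mul_gammaPDFReal ha hr, mul_left_comm, mul_gammaPDFReal (by linarith) hr,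
    show a + 1 + 1 = a + 2 by ring]
  ring

lemma integral_gammaPDFReal (ha : 0 < a) (hr : 0 < r) : ∫ x, gammaPDFReal a r x = 1 := by
  rw [integral_eq_lintegral_of_nonneg_ae (.of_forall (gammaPDFReal_nonneg ha hr)) (by fun_prop)]
  exact (ENNReal.toReal_eq_one_iff _).2 (lintegral_gammaPDF_eq_one ha hr)

lemma integrable_gammaPDFReal (ha : 0 < a) (hr : 0 < r) : Integrable (gammaPDFReal a r) :=
  .of_integral_ne_zero (by rw [integral_gammaPDFReal ha hr]; exact one_ne_zero)

lemma measurable_gammaPDF (a r : ℝ) : Measurable (gammaPDF a r) :=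
  (measurable_gammaPDFReal a r).ennreal_ofReal

lemma integral_gammaMeasure (ha : 0 < a) (hr : 0 < r) (g : ℝ → E) :
    ∫ x, g x ∂gammaMeasure a r = ∫ x, gammaPDFReal a r x • g x := by
  rw [gammaMeasure, integral_withDensity_eq_integral_toReal_smul (measurable_gammaPDF a r)
    (.of_forall fun _ ↦ ENNReal.ofReal_lt_top)]
  simp only [gammaPDF, ENNReal.toReal_ofReal (gammaPDFReal_nonneg ha hr _)]

lemma integrable_gammaMeasure_iff (ha : 0 < a) (hr : 0 < r) {g : ℝ → E} :
    Integrable g (gammaMeasure a r) ↔ Integrable fun x ↦ gammaPDFReal a r x • g x := by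
  rw [gammaMeasure, integrable_withDensity_iff_integrable_smul' (measurable_gammaPDF a r)
    (.of_forall fun _ ↦ ENNReal.ofReal_lt_top)]
  simp only [gammaPDF, ENNReal.toReal_ofReal (gammaPDFReal_nonneg ha hr _)]

lemma integral_id_gammaMeasure (ha : 0 < a) (hr : 0 < r) :
    ∫ x, x ∂gammaMeasure a r = a / r := by
  simp only [integral_gammaMeasure ha hr, smul_eq_mul, mul_comm (gammaPDFReal a r _),
    mul_gammaPDFReal ha hr]
  rw [integral_const_mul, integral_gammaPDFReal (by positivity) hr, mul_one]

lemma integral_sq_gammaMeasure (ha : 0 < a) (hr : 0 < r) :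
    ∫ x, x ^ 2 ∂gammaMeasure a r = a * (a + 1) / r ^ 2 := by
  simp only [integral_gammaMeasure ha hr, smul_eq_mul, mul_comm (gammaPDFReal a r _),
    sq_mul_gammaPDFReal ha hr]
  rw [integral_const_mul, integral_gammaPDFReal (by positivity) hr, mul_one]

lemma memLp_two_id_gammaMeasure (ha : 0 < a) (hr : 0 < r) : MemLp id 2 (gammaMeasure a r) := by
  refine (memLp_two_iff_integrable_sq measurable_id.aestronglyMeasurable).2
    ((integrable_gammaMeasure_iff ha hr).2 ?_)
  simp only [id, smul_eq_mul, mul_comm (gammaPDFReal a r _), sq_mul_gammaPDFReal ha hr]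
  exact (integrable_gammaPDFReal (by positivity) hr).const_mul _

lemma variance_id_gammaMeasure (ha : 0 < a) (hr : 0 < r) :
    Var[id; gammaMeasure a r] = a / r ^ 2 := by
  have := isProbabilityMeasure_gammaMeasure ha hr
  rw [variance_eq_sub (memLp_two_id_gammaMeasure ha hr)]
  simp only [Pi.pow_apply, id, integral_sq_gammaMeasure ha hr, integral_id_gammaMeasure ha hr]
  field_simp
  ring

lemma gammaMeasure_self_compl_ball_le (ha : 0 < a) {δ : ℝ} (hδ : 0 < δ) :
    gammaMeasure a a (Metric.ball 1 δ)ᶜ ≤ ENNReal.ofReal (1 / a / δ ^ 2) := by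
  have := isProbabilityMeasure_gammaMeasure ha ha
  have hcheb := meas_ge_le_variance_div_sq (memLp_two_id_gammaMeasure ha ha) hδ
  simp only [id, integral_id_gammaMeasure ha ha, variance_id_gammaMeasure ha ha,
    div_self ha.ne'] at hcheb
  convert hcheb using 2
  · ext x
    simp only [mem_compl_iff, Metric.mem_ball, not_lt, Real.dist_eq, mem_ofPred_eq]
  · field_simp

lemma tendsto_gammaMeasure_self_compl {U : Set ℝ} (hU : U ∈ 𝓝 1) :
    Tendsto (fun a ↦ gammaMeasure a a Uᶜ) atTop (𝓝 0) := by
  obtain ⟨δ, hδ, hδU⟩ := Metric.mem_nhds_iff.1 hU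
  have hbound : Tendsto (fun a : ℝ ↦ ENNReal.ofReal (1 / a / δ ^ 2)) atTop (𝓝 0) := by
    have hinv : Tendsto (fun a : ℝ ↦ 1 / a / δ ^ 2) atTop (𝓝 0) := by
      simpa only [one_div, zero_div] using tendsto_inv_atTop_zero.div_const (δ ^ 2)
    simpa only [ENNReal.ofReal_zero] using ENNReal.tendsto_ofReal hinv
  refine tendsto_of_tendsto_of_tendsto_of_le_of_le' tendsto_const_nhds hbound
    (.of_forall fun _ ↦ zero_le) ?_
  filter_upwards [eventually_gt_atTop 0] with a ha
  exact (measure_mono (compl_subset_compl.2 hδU)).trans (gammaMeasure_self_compl_ball_le ha hδ)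

lemma ae_ne_zero_gammaMeasure (a r : ℝ) : ∀ᵐ s ∂gammaMeasure a r, s ≠ 0 :=
  (withDensity_absolutelyContinuous _ _).ae_le (Measure.ae_ne volume 0)

end GammaDistribution

lemma setIntegral_Ioi_comp_const_div {E : Type*} [NormedAddCommGroup E] [NormedSpace ℝ E]
    {x : ℝ} (hx : 0 < x) (g : ℝ → E) :
    ∫ u in Ioi 0, (x / u ^ 2) • g (x / u) = ∫ s in Ioi 0, g s := by
  have himage : (fun u ↦ x / u) '' Ioi 0 = Ioi 0 := by
    refine Subset.antisymm (image_subset_iff.2 fun u hu ↦ div_pos hx hu) fun s hs ↦ ?_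
    exact ⟨x / s, div_pos hx hs, div_div_cancel₀ hx.ne'⟩
  have hderiv (u : ℝ) (hu : u ∈ Ioi 0) :
      HasDerivWithinAt (fun u ↦ x / u) (-(x / u ^ 2)) (Ioi 0) u := by
    simpa only [div_eq_mul_inv, mul_neg, neg_mul, id] using!
      ((hasDerivAt_inv (ne_of_gt hu)).const_mul x).hasDerivWithinAt
  have hinj : InjOn (fun u ↦ x / u) (Ioi 0) := fun u _ v _ huv ↦ by
    simpa only [div_div_cancel₀ hx.ne'] using congrArg (x / ·) huv
  conv_rhs => rw [← himage, integral_image_eq_integral_abs_deriv_smul measurableSet_Ioi hderiv hinj]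
  refine setIntegral_congr_fun measurableSet_Ioi fun u _ ↦ ?_
  simp only [abs_neg, abs_of_nonneg (div_nonneg hx.le (sq_nonneg u))]

lemma gammaPDFReal_natCast {n : ℕ} (hn : 0 < n) (r : ℝ) {x : ℝ} (hx : 0 ≤ x) :
    gammaPDFReal n r x = r ^ n / ((n - 1).factorial : ℝ) * x ^ (n - 1) * exp (-(r * x)) := by
  obtain ⟨m, rfl⟩ := Nat.exists_eq_succ_of_ne_zero hn.ne'
  simp only [gammaPDFReal, if_pos hx, Nat.cast_succ, Gamma_nat_eq_factorial, add_sub_cancel_right,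
    rpow_natCast, Nat.succ_sub_one]
  rw [← Nat.cast_succ, rpow_natCast]

lemma dilationMixture_gammaMeasure_natCast {E : Type*} [NormedAddCommGroup E] [NormedSpace ℝ E]
    {n : ℕ} (hn : 0 < n) (f : ℝ → E) {x : ℝ} (hx : 0 < x) :
    dilationMixture (gammaMeasure n n) f x =
      ∫ u in Ioi 0, ((n : ℝ) ^ n * x ^ (n - 1) / (((n - 1).factorial : ℝ) * u ^ n) *
        exp (-(n * x) / u)) • f u := by
  have hn0 : (0 : ℝ) < n := Nat.cast_pos.2 hn
  have hsupp (s : ℝ) (hs : s ∉ Ioi 0) : gammaPDFReal n n s • dilate s f x = 0 := by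
    rcases (not_lt.1 (mem_Ioi.not.1 hs)).lt_or_eq with hs | rfl
    · rw [gammaPDFReal, if_neg hs.not_ge, zero_smul]
    · rw [dilate, inv_zero, zero_smul, smul_zero]
  rw [dilationMixture, integral_gammaMeasure hn0 hn0,
    ← setIntegral_eq_integral_of_forall_compl_eq_zero hsupp, ← setIntegral_Ioi_comp_const_div hx]
  refine setIntegral_congr_fun measurableSet_Ioi fun u (hu : 0 < u) ↦ ?_
  obtain ⟨m, rfl⟩ := Nat.exists_eq_succ_of_ne_zero hn.ne'
  simp only [dilate, gammaPDFReal_natCast hn _ (div_pos hx hu).le, smul_smul,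
    div_div_cancel₀ hx.ne', ← mul_div_assoc, neg_div, Nat.succ_sub_one, div_pow, pow_succ u]
  congr 1
  field_simp

lemma dilationMixture_gammaMeasure_natCast_of_support_subset {E : Type*} [NormedAddCommGroup E]
    [NormedSpace ℝ E] {n : ℕ} (hn : 0 < n) {c : ℝ} (hc : 0 ≤ c) {f : ℝ → E}
    (hf : f.support ⊆ Ici c) {x : ℝ} (hx : 0 < x) :
    dilationMixture (gammaMeasure n n) f x =
      ∫ u in Ici c, ((n : ℝ) ^ n * x ^ (n - 1) / (((n - 1).factorial : ℝ) * u ^ n) *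
        exp (-(n * x) / u)) • f u := by
  rw [dilationMixture_gammaMeasure_natCast hn f hx, ← integral_Ici_eq_integral_Ioi]
  refine setIntegral_eq_of_subset_of_forall_sdiff_eq_zero measurableSet_Ici
    (Ici_subset_Ici.2 hc) fun u hu ↦ ?_
  rw [Function.notMem_support.1 fun hfu ↦ hu.2 (hf hfu), smul_zero]

lemma norm_prod_sub_prod_le {ι R : Type*} [NormedCommRing R] [NormOneClass R] (s : Finset ι)
    (a b : ι → R) :
    ‖∏ i ∈ s, a i - ∏ i ∈ s, b i‖ ≤ ∏ i ∈ s, (‖a i - b i‖ + ‖b i‖) - ∏ i ∈ s, ‖b i‖ := by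
  classical
  induction s using Finset.induction_on with
  | empty => simp only [Finset.prod_empty, sub_self, norm_zero, le_refl]
  | insert j s hj ih =>
    have ha : ‖∏ i ∈ s, a i‖ ≤ ∏ i ∈ s, (‖a i - b i‖ + ‖b i‖) :=
      (Finset.norm_prod_le s a).trans
        (Finset.prod_le_prod (fun _ _ ↦ norm_nonneg _) fun i _ ↦ norm_le_norm_sub_add (a i) (b i))
    simp only [Finset.prod_insert hj]
    calc ‖a j * ∏ i ∈ s, a i - b j * ∏ i ∈ s, b i‖
        = ‖(a j - b j) * ∏ i ∈ s, a i + b j * (∏ i ∈ s, a i - ∏ i ∈ s, b i)‖ := by ring_nf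
      _ ≤ ‖a j - b j‖ * ‖∏ i ∈ s, a i‖ + ‖b j‖ * ‖∏ i ∈ s, a i - ∏ i ∈ s, b i‖ :=
        (norm_add_le _ _).trans (add_le_add (norm_mul_le _ _) (norm_mul_le _ _))
      _ ≤ ‖a j - b j‖ * ∏ i ∈ s, (‖a i - b i‖ + ‖b i‖) +
            ‖b j‖ * (∏ i ∈ s, (‖a i - b i‖ + ‖b i‖) - ∏ i ∈ s, ‖b i‖) := by gcongr
      _ = _ := by ring

section L1

variable {ι α X 𝕜 : Type*} [Fintype ι] [MeasurableSpace X] {l : Filter α}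

lemma integral_norm_prod_sub_prod_le [NormedCommRing 𝕜] [NormOneClass 𝕜] {μ : ι → Measure X}
    [∀ i, SigmaFinite (μ i)] {f g : ι → X → 𝕜}
    (hf : ∀ i, Integrable (f i) (μ i)) (hg : ∀ i, Integrable (g i) (μ i)) :
    ∫ y, ‖∏ i, f i (y i) - ∏ i, g i (y i)‖ ∂Measure.pi μ ≤
      ∏ i, (∫ x, ‖f i x - g i x‖ ∂μ i + ∫ x, ‖g i x‖ ∂μ i) - ∏ i, ∫ x, ‖g i x‖ ∂μ i := by
  have hsum : ∀ i, Integrable (fun x ↦ ‖f i x - g i x‖ + ‖g i x‖) (μ i) := fun i ↦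
    ((hf i).sub (hg i)).norm.add (hg i).norm
  calc ∫ y, ‖∏ i, f i (y i) - ∏ i, g i (y i)‖ ∂Measure.pi μ
      ≤ ∫ y, (∏ i, (‖f i (y i) - g i (y i)‖ + ‖g i (y i)‖) - ∏ i, ‖g i (y i)‖) ∂Measure.pi μ :=
        integral_mono
          ((Integrable.fintype_prod hf).sub (Integrable.fintype_prod hg)).norm
          ((Integrable.fintype_prod hsum).sub (Integrable.fintype_prod fun i ↦ (hg i).norm))
          fun y ↦ norm_prod_sub_prod_le _ _ _
    _ = ∏ i, ∫ x, (‖f i x - g i x‖ + ‖g i x‖) ∂μ i - ∏ i, ∫ x, ‖g i x‖ ∂μ i := by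
        rw [integral_sub (Integrable.fintype_prod hsum)
          (Integrable.fintype_prod fun i ↦ (hg i).norm), ← integral_fintype_prod_eq_prod,
          ← integral_fintype_prod_eq_prod]
    _ = _ := by
        have hadd (i : ι) := integral_add ((hf i).sub (hg i)).norm (hg i).norm
        simp only [Pi.sub_apply] at hadd
        simp only [hadd]

lemma tendsto_eLpNorm_one_zero_iff {E : Type*} [NormedAddCommGroup E] {μ : Measure X}
    {F : α → X → E} (hF : ∀ i, Integrable (F i) μ) :
    Tendsto (fun i ↦ eLpNorm (F i) 1 μ) l (𝓝 0) ↔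
      Tendsto (fun i ↦ ∫ x, ‖F i x‖ ∂μ) l (𝓝 0) := by
  simp only [eLpNorm_one_eq_lintegral_enorm, ← ofReal_integral_norm_eq_lintegral_enorm (hF _)]
  refine ⟨fun h ↦ ?_, fun h ↦ ENNReal.ofReal_zero ▸ ENNReal.tendsto_ofReal h⟩
  simpa only [Function.comp_def, ENNReal.toReal_ofReal (integral_nonneg fun _ ↦ norm_nonneg _),
    ENNReal.toReal_zero] using (ENNReal.tendsto_toReal ENNReal.zero_ne_top).comp h

lemma tendsto_eLpNorm_prod_sub_prod [NormedCommRing 𝕜] [NormOneClass 𝕜] {μ : ι → Measure X}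
    [∀ i, SigmaFinite (μ i)] {F : α → ι → X → 𝕜} {f : ι → X → 𝕜}
    (hF : ∀ n i, Integrable (F n i) (μ i)) (hf : ∀ i, Integrable (f i) (μ i))
    (hFf : ∀ i, Tendsto (fun n ↦ eLpNorm (F n i - f i) 1 (μ i)) l (𝓝 0)) :
    Tendsto (fun n ↦ eLpNorm ((fun y ↦ ∏ i, F n i (y i)) - fun y ↦ ∏ i, f i (y i)) 1
      (Measure.pi μ)) l (𝓝 0) := by
  rw [tendsto_eLpNorm_one_zero_iff fun n ↦
    (Integrable.fintype_prod (hF n)).sub (Integrable.fintype_prod hf)]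
  have hFf_int (i : ι) : Tendsto (fun n ↦ ∫ x, ‖F n i x - f i x‖ ∂μ i) l (𝓝 0) :=
    (tendsto_eLpNorm_one_zero_iff fun n ↦ (hF n i).sub (hf i)).1 (hFf i)
  have hbound : Tendsto (fun n ↦ ∏ i, (∫ x, ‖F n i x - f i x‖ ∂μ i + ∫ x, ‖f i x‖ ∂μ i) -
      ∏ i, ∫ x, ‖f i x‖ ∂μ i) l (𝓝 0) := by
    simpa only [zero_add, sub_self] using
      (tendsto_finsetProd Finset.univ fun i _ ↦ (hFf_int i).add_const (∫ x, ‖f i x‖ ∂μ i)).sub_const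
        (∏ i, ∫ x, ‖f i x‖ ∂μ i)
  exact squeeze_zero (fun _ ↦ integral_nonneg fun _ ↦ norm_nonneg _)
    (fun n ↦ integral_norm_prod_sub_prod_le (hF n) hf) hbound

lemma tendsto_setIntegral_norm_sub {E : Type*} [NormedAddCommGroup E] {μ : Measure X}
    {F G : α → X → E} {f g : X → E} (hF : ∀ i, Integrable (F i) μ) (hG : ∀ i, Integrable (G i) μ)
    (hf : Integrable f μ) (hg : Integrable g μ)
    (hFf : Tendsto (fun i ↦ eLpNorm (F i - f) 1 μ) l (𝓝 0))
    (hGg : Tendsto (fun i ↦ eLpNorm (G i - g) 1 μ) l (𝓝 0)) (s : Set X) :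
    Tendsto (fun i ↦ ∫ x in s, ‖F i x - G i x‖ ∂μ) l (𝓝 (∫ x in s, ‖f x - g x‖ ∂μ)) := by
  refine tendsto_setIntegral_of_L1' _ (hf.sub hg).norm.1
    (.of_forall fun i ↦ ((hF i).sub (hG i)).norm)
    (tendsto_of_tendsto_of_tendsto_of_le_of_le tendsto_const_nhds
      (by simpa only [add_zero] using hFf.add hGg) (fun _ ↦ zero_le) fun i ↦ ?_) s
  calc eLpNorm ((fun x ↦ ‖F i x - G i x‖) - fun x ↦ ‖f x - g x‖) 1 μ
      ≤ eLpNorm ((F i - f) - (G i - g)) 1 μ := by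
        refine eLpNorm_mono fun x ↦ ?_
        rw [sub_sub_sub_comm]
        exact abs_norm_sub_norm_le _ _
    _ ≤ eLpNorm (F i - f) 1 μ + eLpNorm (G i - g) 1 μ :=
        eLpNorm_sub_le ((hF i).sub hf).1 ((hG i).sub hg).1 le_rfl

end L1

theorem tendsto_setIntegral_norm_prod_dilationMixture_sub {ι α 𝕜 : Type*} [Fintype ι]
    [NormedCommRing 𝕜] [NormOneClass 𝕜] [NormedSpace ℝ 𝕜] [CompleteSpace 𝕜]
    {l : Filter α} {μ : α → Measure ℝ} [∀ i, IsProbabilityMeasure (μ i)]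
    (hμ0 : ∀ i, ∀ᵐ s ∂μ i, s ≠ 0) (hμ1 : ∀ U ∈ 𝓝 (1 : ℝ), Tendsto (fun i ↦ μ i Uᶜ) l (𝓝 0))
    {f g : ι → ℝ → 𝕜} (hf : ∀ k, Integrable (f k)) (hg : ∀ k, Integrable (g k))
    (s : Set (ι → ℝ)) :
    Tendsto (fun i ↦ ∫ y in s, ‖∏ k, dilationMixture (μ i) (f k) (y k) -
        ∏ k, dilationMixture (μ i) (g k) (y k)‖) l
      (𝓝 (∫ y in s, ‖∏ k, f k (y k) - ∏ k, g k (y k)‖)) :=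
  tendsto_setIntegral_norm_sub
    (fun i ↦ .fintype_prod fun k ↦ integrable_dilationMixture (hμ0 i) (hf k))
    (fun i ↦ .fintype_prod fun k ↦ integrable_dilationMixture (hμ0 i) (hg k))
    (.fintype_prod hf) (.fintype_prod hg)
    (tendsto_eLpNorm_prod_sub_prod (fun i k ↦ integrable_dilationMixture (hμ0 i) (hf k)) hf
      fun k ↦ tendsto_eLpNorm_dilationMixture_sub hμ0 hμ1 (hf k))
    (tendsto_eLpNorm_prod_sub_prod (fun i k ↦ integrable_dilationMixture (hμ0 i) (hg k)) hg
      fun k ↦ tendsto_eLpNorm_dilationMixture_sub hμ0 hμ1 (hg k)) s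

lemma tendsto_setIntegral_norm_prod_dilationMixture_gammaMeasure_sub {ι 𝕜 : Type*} [Fintype ι]
    [NormedCommRing 𝕜] [NormOneClass 𝕜] [NormedSpace ℝ 𝕜] [CompleteSpace 𝕜]
    {f g : ι → ℝ → 𝕜} (hf : ∀ k, Integrable (f k)) (hg : ∀ k, Integrable (g k))
    (s : Set (ι → ℝ)) :
    Tendsto (fun a : ℝ ↦ ∫ y in s, ‖∏ k, dilationMixture (gammaMeasure a a) (f k) (y k) -
        ∏ k, dilationMixture (gammaMeasure a a) (g k) (y k)‖) atTop
      (𝓝 (∫ y in s, ‖∏ k, f k (y k) - ∏ k, g k (y k)‖)) := by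
  rw [← tendsto_comp_val_Ioi_atTop (a := 0)]
  have (a : Ioi (0 : ℝ)) : IsProbabilityMeasure (gammaMeasure (a : ℝ) a) :=
    isProbabilityMeasure_gammaMeasure a.2 a.2
  exact tendsto_setIntegral_norm_prod_dilationMixture_sub
    (fun a : Ioi (0 : ℝ) ↦ ae_ne_zero_gammaMeasure a a)
    (fun U hU ↦ tendsto_comp_val_Ioi_atTop.2 (tendsto_gammaMeasure_self_compl hU)) hf hg s

lemma setIntegral_univ_pi_Ioi_norm_prod_sub_prod {ι 𝕜 : Type*} [Fintype ι] [NormedCommRing 𝕜]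
    {a : ι → ℝ} {f g : ι → ℝ → 𝕜} (hf : ∀ k, (f k).support ⊆ Ici (a k))
    (hg : ∀ k, (g k).support ⊆ Ici (a k)) :
    ∫ y in univ.pi fun k ↦ Ioi (a k), ‖∏ k, f k (y k) - ∏ k, g k (y k)‖ =
      ∫ y : ι → ℝ, ‖∏ k, f k (y k) - ∏ k, g k (y k)‖ := by
  rw [volume_pi, setIntegral_congr_set Measure.univ_pi_Ioi_ae_eq_Ici]
  refine setIntegral_eq_integral_of_forall_compl_eq_zero fun y hy ↦ ?_
  obtain ⟨k, hk⟩ := not_forall.1 hy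
  have hfk : f k (y k) = 0 := Function.notMem_support.1 fun h ↦ hk (hf k h)
  have hgk : g k (y k) = 0 := Function.notMem_support.1 fun h ↦ hk (hg k h)
  rw [Finset.prod_eq_zero (Finset.mem_univ k) hfk, Finset.prod_eq_zero (Finset.mem_univ k) hgk,
    sub_zero, norm_zero]

lemma integrable_ite_exp_neg_sub_div {q : ℝ} (hq : 0 < q) (c : ℝ) :
    Integrable fun x ↦ if c ≤ x then exp (-(x - c) / q) else 0 := by
  have hexp : IntegrableOn (fun x ↦ exp (c / q) * exp (-q⁻¹ * x)) (Ioi c) :=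
    (integrableOn_exp_mul_Ioi (neg_neg_iff_pos.2 (inv_pos.2 hq)) c).const_mul _
  have hind : Integrable ((Ici c).indicator fun x ↦ exp (-(x - c) / q)) := by
    rw [integrable_indicator_iff measurableSet_Ici, integrableOn_Ici_iff_integrableOn_Ioi]
    refine hexp.congr_fun (fun x _ ↦ ?_) measurableSet_Ioi
    simp only [← exp_add]
    ring_nf
  simpa only [indicator_apply, mem_Ici] using! hind

lemma integrable_ite_exp_sub_exp_div {p q : ℝ} (hp : 0 < p) (hq : 0 < q) (c d : ℝ) :
    Integrable fun x ↦ if c ≤ x then (exp (-(x - c) / q) - exp (-(x - c) / p)) / d else 0 := by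
  refine (((integrable_ite_exp_neg_sub_div hq c).sub
    (integrable_ite_exp_neg_sub_div hp c)).div_const d).congr (.of_forall fun x ↦ ?_)
  simp only [Pi.sub_apply]
  split_ifs <;> simp only [sub_self, zero_div]

lemma integrable_ite_const_mul_exp {q : ℝ} (hq : 0 < q) (b c : ℝ) :
    Integrable fun x ↦ if c ≤ x then b * exp (-(x - c) / q) else 0 := by
  simpa only [mul_ite, mul_zero] using (integrable_ite_exp_neg_sub_div hq c).const_mul b

lemma support_ite_le_subset {X M : Type*} [Preorder X] [DecidableLE X] [Zero M] (c : X)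
    (h : X → M) : (Function.support fun x ↦ if c ≤ x then h x else 0) ⊆ Ici c :=
  fun _ hx ↦ of_not_not fun hcx ↦ hx (if_neg hcx)

theorem stmt_19_general {ι : Type*} [Fintype ι] {a : ι → ℝ} (ha : ∀ k, 0 ≤ a k)
    {f g : ι → ℝ → ℝ} (hf : ∀ k, Integrable (f k)) (hg : ∀ k, Integrable (g k))
    (hfa : ∀ k, (f k).support ⊆ Ici (a k)) (hga : ∀ k, (g k).support ⊆ Ici (a k))
    {fn gn : ℕ → ι → ℝ → ℝ}
    (hfn : ∀ᶠ n : ℕ in atTop, ∀ k, ∀ x : ℝ, 0 < x →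
      fn n k x = ∫ u in Ici (a k),
        (n : ℝ) ^ n * x ^ (n - 1) / ((Nat.factorial (n - 1) : ℝ) * u ^ n) *
          exp (-(n * x) / u) * f k u)
    (hgn : ∀ᶠ n : ℕ in atTop, ∀ k, ∀ x : ℝ, 0 < x →
      gn n k x = ∫ v in Ici (a k),
        (n : ℝ) ^ n * x ^ (n - 1) / ((Nat.factorial (n - 1) : ℝ) * v ^ n) *
          exp (-(n * x) / v) * g k v) :
    Tendsto (fun n : ℕ ↦
        (1 / 2) * ∫ y in univ.pi fun _ : ι ↦ Ioi (0 : ℝ),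
          |(∏ k, fn n k (y k)) - ∏ k, gn n k (y k)|)
      atTop
      (𝓝 ((1 / 2) * ∫ y : ι → ℝ, |(∏ k, f k (y k)) - ∏ k, g k (y k)|)) := by
  have hlim := (tendsto_setIntegral_norm_prod_dilationMixture_gammaMeasure_sub hf hg
    (univ.pi fun _ ↦ Ioi 0)).comp tendsto_natCast_atTop_atTop
  rw [setIntegral_univ_pi_Ioi_norm_prod_sub_prod
    (fun k ↦ (hfa k).trans (Ici_subset_Ici.2 (ha k)))
    (fun k ↦ (hga k).trans (Ici_subset_Ici.2 (ha k)))] at hlim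
  refine (hlim.congr' ?_).const_mul _
  filter_upwards [hfn, hgn, eventually_gt_atTop 0] with n hfn hgn hn
  refine setIntegral_congr_fun (.univ_pi fun _ ↦ measurableSet_Ioi) fun y hy ↦ ?_
  simp only [hfn _ _ (hy _ trivial), hgn _ _ (hy _ trivial), norm_eq_abs, smul_eq_mul,
    dilationMixture_gammaMeasure_natCast_of_support_subset hn (ha _) (hfa _) (hy _ trivial),
    dilationMixture_gammaMeasure_natCast_of_support_subset hn (ha _) (hga _) (hy _ trivial)]

theorem stmt_19 (K : ℕ) (hK : 1 ≤ K) (p q σ2 : Fin K → ℝ)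
    (hp : ∀ k, 0 < p k) (hpq : ∀ k, p k < q k) (hσ : ∀ k, 0 < σ2 k)
    (fU fV : Fin K → ℝ → ℝ)
    (hfU : ∀ k x, fU k x =
      if σ2 k ≤ x then
        (Real.exp (-(x - σ2 k) / q k) - Real.exp (-(x - σ2 k) / p k)) / (q k - p k)
      else 0)
    (hfV : ∀ k x, fV k x =
      if σ2 k ≤ x then (1 / q k) * Real.exp (-(x - σ2 k) / q k) else 0)
    (fUn fVn : ℕ → Fin K → ℝ → ℝ)
    (hfUn : ∀ n : ℕ, 2 ≤ n → ∀ k, ∀ x : ℝ, 0 < x →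
      fUn n k x = ∫ u in Set.Ici (σ2 k),
        (n : ℝ) ^ n * x ^ (n - 1) / ((Nat.factorial (n - 1) : ℝ) * u ^ n) *
          Real.exp (-(n * x) / u) * fU k u)
    (hfVn : ∀ n : ℕ, 2 ≤ n → ∀ k, ∀ x : ℝ, 0 < x →
      fVn n k x = ∫ v in Set.Ici (σ2 k),
        (n : ℝ) ^ n * x ^ (n - 1) / ((Nat.factorial (n - 1) : ℝ) * v ^ n) *
          Real.exp (-(n * x) / v) * fV k v) :
    Tendsto (fun n : ℕ =>
        (1 / 2) * ∫ y in Set.univ.pi fun _ : Fin K => Set.Ioi (0 : ℝ),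
          |(∏ k, fUn n k (y k)) - ∏ k, fVn n k (y k)|)
      atTop
      (nhds ((1 / 2) * ∫ y : Fin K → ℝ, |(∏ k, fU k (y k)) - ∏ k, fV k (y k)|)) := by
  obtain rfl := funext₂ hfU
  obtain rfl := funext₂ hfV
  have hq (k : Fin K) : 0 < q k := (hp k).trans (hpq k)
  exact stmt_19_general (fun k ↦ (hσ k).le)
    (fun k ↦ integrable_ite_exp_sub_exp_div (hp k) (hq k) _ _)
    (fun k ↦ integrable_ite_const_mul_exp (hq k) _ _)
    (fun k ↦ support_ite_le_subset _ _) (fun k ↦ support_ite_le_subset _ _)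
    ((eventually_ge_atTop 2).mono hfUn) ((eventually_ge_atTop 2).mono hfVn)
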